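/- There exist a set Z and a semigroup isomorphism between reg(T) (under composition) and the full transformation semigroup T(Z) of all maps from Z to itself (under composition) if and only if E = X × X (E is the universal relation on X). -/

import Mathlib

universe u

/-- The semigroup `T_{E*}(X)` of maps preserving `E` in both directions. -/
def TEstar {X : Type u} (E : Setoid X) : Set (X → X) :=
  {α | ∀ x y : X, E.r x y ↔ E.r (α x) (α y)}

/-- The `E`-class of `x`. -/
def cls {X : Type u} (E : Setoid X) (x : X) : Set X := {y | E.r x y}

/-- The regular part `reg(T)` of `T_{E*}(X)`: every `E`-class meets the range. -/
def regT {X : Type u} (E : Setoid X) : Set (X → X) :=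
  {α | α ∈ TEstar E ∧ ∀ x : X, (cls E x ∩ Set.range α).Nonempty}

/-
An element of `reg(T)` is exactly a map that induces a permutation of `X/E`, and every permutation
of `X/E` is induced in this way. A constant map `f` of `Z` satisfies `f ∘ g = f` for all `g`, so
through an isomorphism `reg(T)` has an element `γ` with `γ ∘ α = γ` for all `α`. Cancelling the
permutation induced by `γ`, every `α` induces the identity on `X/E`. Hence `X/E` has no nontrivial
permutation, i.e. at most one point.
-/

open Function

theorem exists_forall_comp_eq_self (Z : Type*) : ∃ f : Z → Z, ∀ g : Z → Z, f ∘ g = f := by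
  cases isEmpty_or_nonempty Z with
  | inl _ => exact ⟨id, fun _ => Subsingleton.elim _ _⟩
  | inr hZ => exact hZ.elim fun z => ⟨const Z z, fun _ => const_comp⟩

theorem exists_mem_forall_comp_eq_self_of_bijOn {X Z : Type*} {S : Set (X → X)}
    {φ : (X → X) → (Z → Z)} (hS : ∀ α ∈ S, ∀ β ∈ S, β ∘ α ∈ S) (hφ : Set.BijOn φ S Set.univ)
    (hcomp : ∀ α ∈ S, ∀ β ∈ S, φ (β ∘ α) = φ β ∘ φ α) :
    ∃ γ ∈ S, ∀ α ∈ S, γ ∘ α = γ := by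
  obtain ⟨f, hf⟩ := exists_forall_comp_eq_self Z
  obtain ⟨γ, hγ, rfl⟩ := hφ.surjOn (Set.mem_univ f)
  exact ⟨γ, hγ, fun α hα => hφ.injOn (hS α hα γ hγ) hγ ((hcomp α hα γ hγ).trans (hf _))⟩

section RegT

variable {X : Type u} {E : Setoid X} {α β γ : X → X}

theorem mem_regT_of_semiconj {σ : Equiv.Perm (Quotient E)}
    (h : Semiconj (Quotient.mk E) α σ) : α ∈ regT E := by
  refine ⟨fun x y => ?_, fun x => ?_⟩
  · calc E.r x y ↔ Quotient.mk E x = Quotient.mk E y := Quotient.eq.symm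
      _ ↔ σ (Quotient.mk E x) = σ (Quotient.mk E y) := σ.apply_eq_iff_eq.symm
      _ ↔ Quotient.mk E (α x) = Quotient.mk E (α y) := by rw [h x, h y]
      _ ↔ E.r (α x) (α y) := Quotient.eq
  · obtain ⟨y, hy⟩ := Quotient.exists_rep (σ.symm (Quotient.mk E x))
    have hxy : Quotient.mk E x = Quotient.mk E (α y) := by rw [h y, hy, σ.apply_symm_apply]
    exact ⟨α y, Quotient.exact hxy, y, rfl⟩

theorem exists_semiconj_of_mem_regT (hα : α ∈ regT E) :
    ∃ σ : Equiv.Perm (Quotient E), Semiconj (Quotient.mk E) α σ := by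
  let q : Quotient E → Quotient E := Quotient.map α fun x y => (hα.1 x y).1
  have hinj : Injective q := by
    rintro ⟨x⟩ ⟨y⟩ hxy
    exact Quotient.sound ((hα.1 x y).2 (Quotient.exact hxy))
  have hsurj : Surjective q := by
    rintro ⟨x⟩
    obtain ⟨_, hx, y, rfl⟩ := hα.2 x
    exact ⟨Quotient.mk E y, Quotient.sound (E.symm hx)⟩
  exact ⟨Equiv.ofBijective q ⟨hinj, hsurj⟩, fun _ => rfl⟩

theorem comp_mem_regT (hβ : β ∈ regT E) (hα : α ∈ regT E) : β ∘ α ∈ regT E := by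
  obtain ⟨σ, hσ⟩ := exists_semiconj_of_mem_regT hα
  obtain ⟨τ, hτ⟩ := exists_semiconj_of_mem_regT hβ
  exact mem_regT_of_semiconj (σ := τ * σ) (hτ.comp_right hσ)

theorem exists_semiconj_quotientMk (q : Quotient E → Quotient E) :
    ∃ α : X → X, Semiconj (Quotient.mk E) α q :=
  ⟨fun x => (q (Quotient.mk E x)).out, fun _ => Quotient.out_eq _⟩

theorem exists_mem_regT_rel (E : Setoid X) (x y : X) : ∃ α ∈ regT E, E.r (α x) y := by
  classical
  obtain ⟨α, hα⟩ := exists_semiconj_quotientMk (Equiv.swap (Quotient.mk E x) (Quotient.mk E y))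
  have hxy : Quotient.mk E (α x) = Quotient.mk E y := (hα x).trans (Equiv.swap_apply_left _ _)
  exact ⟨α, mem_regT_of_semiconj hα, Quotient.exact hxy⟩

theorem rel_of_forall_mem_regT_comp_eq_self (hγ : γ ∈ TEstar E)
    (hzero : ∀ α ∈ regT E, γ ∘ α = γ) (x y : X) : E.r x y := by
  obtain ⟨α, hα, hαxy⟩ := exists_mem_regT_rel E x y
  have hγαx : γ (α x) = γ x := congrFun (hzero α hα) x
  have hxα : E.r x (α x) := (hγ x (α x)).2 (hγαx ▸ E.refl _)
  exact E.trans hxα hαxy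

theorem regT_eq_univ (h : ∀ x y : X, E.r x y) : regT E = Set.univ :=
  Set.eq_univ_of_forall fun _ =>
    mem_regT_of_semiconj (σ := 1) fun _ => Quotient.sound (h _ _)

end RegT

/-- `reg(T)` is isomorphic to a full transformation semigroup `T(Z)` iff `E` is
the universal relation on `X`. -/
theorem stmt18 {X : Type u} [Nonempty X] (E : Setoid X) :
    (∃ (Z : Type u) (φ : (X → X) → (Z → Z)),
      Set.BijOn φ (regT E) Set.univ ∧
      ∀ α ∈ regT E, ∀ β ∈ regT E, φ (β ∘ α) = φ β ∘ φ α) ↔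
    ∀ x y : X, E.r x y := by
  constructor
  · rintro ⟨Z, φ, hφ, hcomp⟩
    obtain ⟨γ, hγ, hzero⟩ := exists_mem_forall_comp_eq_self_of_bijOn
      (fun α hα β hβ => comp_mem_regT hβ hα) hφ hcomp
    exact rel_of_forall_mem_regT_comp_eq_self hγ.1 hzero
  · intro h
    exact ⟨X, id, (regT_eq_univ h).symm ▸ Set.bijOn_id _, fun _ _ _ _ => rfl⟩
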